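/- (Browder's fixpoint theorem, as used in the paper.) Let D be a nonempty compact convex subset of ℝ^d and let H : [0,1] × D → D be continuous. Then there exists a connected subset P of { (t,x) ∈ [0,1] × D : H(t,x) = x } that contains a point of the form (0, x₀) and a point of the form (1, x₁); in particular x₀ is a fixpoint of H(0,·) and x₁ is a fixpoint of H(1,·). -/

import Mathlib

open MeasureTheory Metric Set Filter Topology
open scoped NNReal

section

variable {E : Type*} [NormedAddCommGroup E] [InnerProductSpace ℝ E]

theorem exists_lipschitz_projection {K : Set E} (hne : K.Nonempty) (hK : IsComplete K)
    (hc : Convex ℝ K) :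
    ∃ p : E → E, LipschitzWith 1 p ∧ (∀ x, p x ∈ K) ∧
      ∀ x, ∀ w ∈ K, inner ℝ (x - p x) (w - p x) ≤ 0 := by
  choose p hpK hp using exists_norm_eq_iInf_of_complete_convex hne hK hc
  have key : ∀ x, ∀ w ∈ K, inner ℝ (x - p x) (w - p x) ≤ 0 := fun x =>
    (norm_eq_iInf_iff_real_inner_le_zero hc (hpK x)).1 (hp x)
  refine ⟨p, LipschitzWith.of_dist_le_mul fun x y => ?_, hpK, key⟩
  have h1 := key x (p y) (hpK y)
  have h2 := key y (p x) (hpK x)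
  have h3 : ‖p x - p y‖ ^ 2 ≤ inner ℝ (x - y) (p x - p y) := by
    have e : inner ℝ (x - y) (p x - p y) - inner ℝ (p x - p y) (p x - p y)
        = - inner ℝ (x - p x) (p y - p x) - inner ℝ (y - p y) (p x - p y) := by
      simp only [inner_sub_left, inner_sub_right]; ring
    rw [← real_inner_self_eq_norm_sq]
    linarith
  have h4 := real_inner_le_norm (x - y) (p x - p y)
  rw [NNReal.coe_one, one_mul, dist_eq_norm, dist_eq_norm]
  by_contra! h
  nlinarith [norm_nonneg (x - y), norm_nonneg (p x - p y)]

theorem projection_eq_self_of_inner_le {K : Set E} {p : E → E}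
    (hp : ∀ x, ∀ w ∈ K, inner ℝ (x - p x) (w - p x) ≤ 0) {x : E} (hx : x ∈ K) : p x = x := by
  have h := hp x x hx
  rw [real_inner_self_nonpos, sub_eq_zero] at h
  exact h.symm

theorem projection_eq_self_of_mem_interior {K : Set E} {p : E → E}
    (hp : ∀ x, ∀ w ∈ K, inner ℝ (x - p x) (w - p x) ≤ 0) {x : E} (hx : p x ∈ interior K) :
    p x = x := by
  have hlim : Tendsto (fun s : ℝ => p x + s • (x - p x)) (𝓝[>] 0) (𝓝 (p x)) := by
    have : Continuous fun s : ℝ => p x + s • (x - p x) := by fun_prop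
    simpa using (this.tendsto 0).mono_left nhdsWithin_le_nhds
  obtain ⟨s, hs, hs0⟩ :=
    ((hlim.eventually (mem_interior_iff_mem_nhds.1 hx)).and self_mem_nhdsWithin).exists
  have h := hp x _ hs
  rw [add_sub_cancel_left, inner_smul_right] at h
  have h' : inner ℝ (x - p x) (x - p x) ≤ 0 := nonpos_of_mul_nonpos_right h hs0
  rw [real_inner_self_nonpos, sub_eq_zero] at h'
  exact h'.symm

theorem exists_contDiff_retraction_of_forall_ne {g : E → E} (hg : ContDiff ℝ 1 g)
    (hg1 : ∀ x, ‖g x‖ ≤ 1) (hne : ∀ x, g x ≠ x) :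
    ∃ r : E → E, (∀ x ∈ closedBall (0 : E) 1, ContDiffAt ℝ 1 r x) ∧
      (∀ x ∈ closedBall (0 : E) 1, ‖r x‖ = 1) ∧ ∀ x, ‖x‖ = 1 → r x = x := by
  set u : E → E := fun x => x - g x with hu
  have hu' : ContDiff ℝ 1 u := contDiff_id.sub hg
  have hun : ∀ x, 0 < ‖u x‖ ^ 2 := fun x =>
    pow_pos (norm_pos_iff.2 (sub_ne_zero.2 (hne x).symm)) 2
  set Δ : E → ℝ := fun x => inner ℝ x (u x) ^ 2 + ‖u x‖ ^ 2 * (1 - ‖x‖ ^ 2) with hΔ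
  have hin : ∀ x, ‖x‖ = 1 → 0 < inner ℝ x (u x) := fun x hx => by
    have h1 := hg1 x
    have h2 : ‖u x‖ ^ 2 = ‖x‖ ^ 2 - 2 * inner ℝ x (g x) + ‖g x‖ ^ 2 := norm_sub_sq_real _ _
    have h3 : inner ℝ x (u x) = ‖x‖ ^ 2 - inner ℝ x (g x) := by
      simp [hu, inner_sub_right]
    have := hun x
    rw [hx] at h2 h3
    nlinarith [norm_nonneg (g x)]
  have hΔ0 : ∀ x ∈ closedBall (0 : E) 1, 0 < Δ x := fun x hx => by
    rw [mem_closedBall_zero_iff] at hx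
    rcases hx.eq_or_lt with h | h
    · have := hin x h
      simp only [hΔ, h]; positivity
    · have : 0 < 1 - ‖x‖ ^ 2 := by nlinarith [norm_nonneg x]
      have := mul_pos (hun x) this
      simp only [hΔ]; positivity
  have hΔc : ContDiff ℝ 1 Δ :=
    ((contDiff_id.inner ℝ hu').pow 2).add
      ((hu'.norm_sq ℝ).mul (contDiff_const.sub (contDiff_id.norm_sq ℝ)))
  refine ⟨fun x => x + ((-inner ℝ x (u x) + √(Δ x)) / ‖u x‖ ^ 2) • u x, ?_, ?_, ?_⟩
  · intro x hx
    refine contDiffAt_id.add (ContDiffAt.smul (ContDiffAt.div (ContDiffAt.add ?_ ?_) ?_ ?_)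
      hu'.contDiffAt)
    · exact (contDiff_id.inner ℝ hu').neg.contDiffAt
    · exact hΔc.contDiffAt.sqrt (hΔ0 x hx).ne'
    · exact (hu'.norm_sq ℝ).contDiffAt
    · exact (hun x).ne'
  · intro x hx
    have hs := Real.sq_sqrt (hΔ0 x hx).le
    have hn := (hun x).ne'
    rw [← sq_eq_sq₀ (norm_nonneg _) zero_le_one, norm_add_sq_real, inner_smul_right, norm_smul,
      mul_pow, Real.norm_eq_abs, sq_abs]
    set a := √(Δ x)
    simp only [hΔ] at hs
    set b : ℝ := inner ℝ x (u x)
    set c := ‖u x‖ ^ 2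
    field_simp
    linear_combination hs
  · intro x hx
    have : Δ x = inner ℝ x (u x) ^ 2 := by simp [hΔ, hx]
    simp [this, Real.sqrt_sq (hin x hx).le]

end

section

variable {E : Type*} [NormedAddCommGroup E] [NormedSpace ℝ E] [FiniteDimensional ℝ E]

theorem exists_polynomial_eval_eq_det_one_add_smul (A : E →L[ℝ] E) :
    ∃ p : Polynomial ℝ, p.natDegree ≤ Module.finrank ℝ E ∧
      ∀ t : ℝ, p.eval t = (1 + t • A).det := by
  let b := Module.finBasis ℝ E
  let M := LinearMap.toMatrix b b (A : E →ₗ[ℝ] E)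
  let I : Matrix (Fin (Module.finrank ℝ E)) (Fin (Module.finrank ℝ E)) ℝ := 1
  refine ⟨((Polynomial.X : Polynomial ℝ) • M.map Polynomial.C + I.map Polynomial.C).det, ?_, ?_⟩
  · simpa using Polynomial.natDegree_det_X_add_C_le M I
  · intro t
    rw [ContinuousLinearMap.det, ← LinearMap.det_toMatrix b, ← Polynomial.coe_evalRingHom,
      RingHom.map_det]
    congr 1
    have : ((1 + t • A : E →L[ℝ] E) : E →ₗ[ℝ] E) = LinearMap.id + t • (A : E →ₗ[ℝ] E) := rfl
    rw [this, map_add (LinearMap.toMatrix b b), map_smul (LinearMap.toMatrix b b),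
      LinearMap.toMatrix_id]
    ext i j
    simp [M, I, Matrix.one_apply, add_comm, apply_ite]
    ring

theorem det_one_add_eq_sum_lagrange (A : E →L[ℝ] E) {v : ℕ → ℝ} (hv : Function.Injective v) :
    (1 + A).det = ∑ i ∈ Finset.range (Module.finrank ℝ E + 1),
      (1 + v i • A).det * (Lagrange.basis (Finset.range (Module.finrank ℝ E + 1)) v i).eval 1 := by
  obtain ⟨p, hp, hpe⟩ := exists_polynomial_eval_eq_det_one_add_smul A
  have h := Lagrange.eq_interpolate (s := Finset.range (Module.finrank ℝ E + 1)) (f := p)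
    hv.injOn (by
      rw [Finset.card_range]
      exact (Polynomial.degree_le_of_natDegree_le hp).trans_lt (by exact_mod_cast Nat.lt_succ_self _))
  have h1 := congrArg (Polynomial.eval 1) h
  rw [hpe, one_smul] at h1
  rw [h1, Lagrange.interpolate_apply, Polynomial.eval_finsetSum]
  simp [hpe]
end

section

variable {E : Type*} [NormedAddCommGroup E] [InnerProductSpace ℝ E] [FiniteDimensional ℝ E]

theorem bijOn_ball_add_smul {h : E → E} {L : ℝ≥0}
    (hL : LipschitzOnWith L h (closedBall 0 1)) (hm : ∀ x ∈ closedBall (0 : E) 1, ‖x + h x‖ ≤ 1)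
    (h0 : ∀ x, ‖x‖ = 1 → h x = 0) {t : ℝ} (ht0 : 0 ≤ t) (ht1 : t < 1) (htL : t * L < 1) :
    BijOn (fun x => x + t • h x) (ball 0 1) (ball 0 1) := by
  refine ⟨?_, ?_, ?_⟩
  · intro x hx
    have e : x + t • h x = (1 - t) • x + t • (x + h x) := by module
    have h1 := hm x (ball_subset_closedBall hx)
    rw [mem_ball_zero_iff] at hx ⊢
    dsimp only
    rw [e]
    refine (norm_add_le _ _).trans_lt ?_
    rw [norm_smul, norm_smul, Real.norm_of_nonneg ht0, Real.norm_of_nonneg (by linarith)]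
    nlinarith
  · intro x hx y hy hxy
    have h1 := hL.dist_le_mul x (ball_subset_closedBall hx) y (ball_subset_closedBall hy)
    have e : x - y = t • (h y - h x) := by
      rw [smul_sub, sub_eq_sub_iff_add_eq_add, add_comm _ y]; exact hxy
    have h2 : dist x y ≤ t * L * dist x y := by
      calc dist x y = t * dist (h x) (h y) := by
            rw [dist_eq_norm, e, norm_smul, Real.norm_of_nonneg ht0, dist_comm, dist_eq_norm]
        _ ≤ _ := by rw [mul_assoc]; gcongr
    by_contra hne
    nlinarith [dist_pos.2 hne]
  · intro y hy
    obtain ⟨p, hpL, hpK, hp⟩ := exists_lipschitz_projection (K := closedBall (0 : E) 1)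
      ⟨0, by simp⟩ isClosed_closedBall.isComplete (convex_closedBall 0 1)
    have hc : ContractingWith (t.toNNReal * L) (fun x => y - t • h (p x)) := by
      refine ⟨?_, LipschitzWith.of_dist_le_mul fun a b => ?_⟩
      · rw [← NNReal.coe_lt_coe]; simpa [ht0] using htL
      · have h1 := hL.dist_le_mul _ (hpK a) _ (hpK b)
        have h2 := hpL.dist_le_mul a b
        simp only [dist_sub_left, dist_smul₀, NNReal.coe_mul, Real.coe_toNNReal _ ht0,
          Real.norm_of_nonneg ht0, mul_assoc]
        rw [NNReal.coe_one, one_mul] at h2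
        have : (L : ℝ) * dist (p a) (p b) ≤ L * dist a b := by gcongr
        gcongr
        linarith
    set x := ContractingWith.fixedPoint _ hc
    have hx : y - t • h (p x) = x := hc.fixedPoint_isFixedPt
    have hy' := mem_ball_zero_iff.1 hy
    by_cases hpx : ‖p x‖ = 1
    · have hxy : y = x := by simpa [h0 _ hpx] using hx
      rw [projection_eq_self_of_inner_le hp (hxy ▸ ball_subset_closedBall hy), ← hxy] at hpx
      linarith
    · have hlt : p x ∈ ball (0 : E) 1 :=
        mem_ball_zero_iff.2 (lt_of_le_of_ne (mem_closedBall_zero_iff.1 (hpK x)) hpx)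
      have e := projection_eq_self_of_mem_interior hp (ball_subset_interior_closedBall hlt)
      rw [e] at hx hlt
      exact ⟨x, hlt, (eq_add_of_sub_eq hx).symm⟩

theorem exists_pos_forall_det_one_add_pos (E : Type*) [NormedAddCommGroup E] [NormedSpace ℝ E] :
    ∃ δ > 0, ∀ B : E →L[ℝ] E, ‖B‖ < δ → 0 < (1 + B).det := by
  have hc : Continuous fun B : E →L[ℝ] E => (1 + B).det :=
    ContinuousLinearMap.continuous_det.comp (by fun_prop)
  have h0 : 0 < (1 + (0 : E →L[ℝ] E)).det := by
    rw [add_zero]; simp [ContinuousLinearMap.det, ContinuousLinearMap.one_def]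
  obtain ⟨δ, hδ, h⟩ := Metric.eventually_nhds_iff.1 ((hc.tendsto 0).eventually_const_lt h0)
  exact ⟨δ, hδ, fun B hB => h (by simpa using hB)⟩

theorem not_exists_contDiff_retraction_closedBall {r : E → E}
    (hr : ∀ x ∈ closedBall (0 : E) 1, ContDiffAt ℝ 1 r x)
    (h1 : ∀ x ∈ closedBall (0 : E) 1, ‖r x‖ = 1) (h2 : ∀ x, ‖x‖ = 1 → r x = x) : False := by
  let : MeasurableSpace E := borel E
  have : BorelSpace E := ⟨rfl⟩
  set h : E → E := fun x => r x - x with hh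
  have hh1 : ∀ x ∈ closedBall (0 : E) 1, ContDiffAt ℝ 1 h x := fun x hx =>
    (hr x hx).sub contDiffAt_id
  have hd : ∀ x ∈ closedBall (0 : E) 1, HasFDerivAt h (fderiv ℝ h x) x := fun x hx =>
    ((hh1 x hx).differentiableAt one_ne_zero).hasFDerivAt
  have hcont : ContinuousOn (fderiv ℝ h) (closedBall 0 1) := fun x hx =>
    (((hh1 x hx).fderiv_right (m := 0) (by simp)).continuousAt).continuousWithinAt
  obtain ⟨M, hM⟩ := (isCompact_closedBall (0 : E) 1).exists_bound_of_continuousOn hcont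
  have hM0 : 0 ≤ M := (norm_nonneg _).trans (hM 0 (by simp))
  lift M to ℝ≥0 using hM0
  have hL : LipschitzOnWith M h (closedBall 0 1) :=
    (convex_closedBall 0 1).lipschitzOnWith_of_nnnorm_hasFDerivWithin_le
      (fun x hx => (hd x hx).hasFDerivWithinAt) hM
  obtain ⟨δ, hδ, hdet⟩ := exists_pos_forall_det_one_add_pos E
  set ε : ℝ := min δ 1 / (M + 2)
  have hε : 0 < ε := by positivity
  have hMε : ε * (M + 2) = min δ 1 := div_mul_cancel₀ _ (by positivity)
  have hM' : (0 : ℝ) ≤ M := M.2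
  have hball : ∀ t : ℝ, 0 < t → t ≤ ε →
      IntegrableOn (fun x => (1 + t • fderiv ℝ h x).det) (ball 0 1) volume ∧
      ∫ x in ball (0 : E) 1, (1 + t • fderiv ℝ h x).det = volume.real (ball (0 : E) 1) := by
    intro t ht0 htε
    have ht : t * (M + 2) ≤ min δ 1 := hMε ▸ by gcongr
    have ht1 := ht.trans (min_le_right _ _)
    have htδ := ht.trans (min_le_left _ _)
    have hb := bijOn_ball_add_smul hL (fun x hx => by simp [hh, h1 x hx])
      (fun x hx => by simp [hh, h2 x hx]) ht0.le (by nlinarith) (by nlinarith)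
    have hd' : ∀ x ∈ ball (0 : E) 1, HasFDerivWithinAt (fun x => x + t • h x)
        (1 + t • fderiv ℝ h x) (ball 0 1) x := fun x hx =>
      ((hasFDerivAt_id x).add ((hd x (ball_subset_closedBall hx)).const_smul t)).hasFDerivWithinAt
    have hpos : ∀ x ∈ ball (0 : E) 1,
        |(1 + t • fderiv ℝ h x).det| • (1 : ℝ) = (1 + t • fderiv ℝ h x).det := fun x hx => by
      rw [smul_eq_mul, mul_one, abs_of_pos]
      apply hdet
      rw [norm_smul, Real.norm_of_nonneg ht0.le]
      have := hM x (ball_subset_closedBall hx)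
      nlinarith
    have hi := integrableOn_image_iff_integrableOn_abs_det_fderiv_smul volume measurableSet_ball
      hd' hb.injOn (fun _ => (1 : ℝ))
    have hj := integral_image_eq_integral_abs_det_fderiv_smul volume measurableSet_ball
      hd' hb.injOn (fun _ => (1 : ℝ))
    rw [hb.image_eq] at hi hj
    rw [integrableOn_congr_fun hpos measurableSet_ball] at hi
    rw [setIntegral_congr_fun measurableSet_ball hpos] at hj
    refine ⟨hi.1 (integrableOn_const measure_ball_lt_top.ne), hj ▸ by simp⟩
  have hzero : ∀ x ∈ ball (0 : E) 1, (1 + fderiv ℝ h x).det = 0 := by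
    intro x hx
    have hx' := ball_subset_closedBall hx
    have hrd : HasFDerivAt r (1 + fderiv ℝ h x) x := by
      exact ((hasFDerivAt_id x).add (hd x hx')).congr_of_eventuallyEq
        (.of_forall fun y => by simp [hh])
    by_contra hne
    have hsurj := (LinearMap.equivOfDetNeZero _ hne).surjective
    obtain ⟨v, hv⟩ := hsurj (r x)
    have hv' : (1 + fderiv ℝ h x) v = r x := hv
    have hc : HasFDerivAt (fun y => ‖r y‖ ^ 2) (0 : E →L[ℝ] ℝ) x := by
      refine (hasFDerivAt_const (1 : ℝ) x).congr_of_eventuallyEq ?_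
      filter_upwards [isOpen_ball.mem_nhds hx] with y hy
      rw [h1 y (ball_subset_closedBall hy), one_pow]
    have he := congrArg (fun A : E →L[ℝ] ℝ => A v) (hrd.norm_sq.unique hc)
    simp only [smul_apply, ContinuousLinearMap.comp_apply, hv',
      innerSL_apply_apply, real_inner_self_eq_norm_sq, h1 x hx', zero_apply] at he
    norm_num at he
  set v : ℕ → ℝ := fun i => ε / (i + 1)
  have hv : Function.Injective v := fun i j hij => by
    have hij' : ε / (i + 1) = ε / (j + 1) := hij
    field_simp at hij'
    exact_mod_cast (add_right_cancel hij').symm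
  have hv0 : ∀ i, 0 < v i := fun i => by positivity
  have hvε : ∀ i, v i ≤ ε := fun i => div_le_self hε.le (by simp)
  set s := Finset.range (Module.finrank ℝ E + 1)
  have hsum : ∫ x in ball (0 : E) 1, (1 + fderiv ℝ h x).det
      = ∑ i ∈ s, volume.real (ball (0 : E) 1) * (Lagrange.basis s v i).eval 1 := by
    rw [integral_congr_ae (ae_of_all _ fun x => det_one_add_eq_sum_lagrange (fderiv ℝ h x) hv)]
    rw [integral_finsetSum _ fun i _ => ((hball _ (hv0 i) (hvε i)).1).mul_const _]
    refine Finset.sum_congr rfl fun i _ => ?_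
    rw [integral_mul_const, (hball _ (hv0 i) (hvε i)).2]
  rw [setIntegral_congr_fun measurableSet_ball hzero, ← Finset.mul_sum, ← Polynomial.eval_finsetSum,
    Lagrange.sum_basis hv.injOn ⟨0, by simp [s]⟩] at hsum
  have : 0 < volume.real (ball (0 : E) 1) :=
    ENNReal.toReal_pos (measure_ball_pos _ _ one_pos).ne' measure_ball_lt_top.ne
  simp at hsum
  linarith

theorem exists_fixedPoint_of_norm_le_one {f : E → E} (hf : Continuous f)
    (hf1 : ∀ x, ‖f x‖ ≤ 1) : ∃ x, f x = x := by
  by_contra! hne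
  obtain ⟨g, hg⟩ := exists_contMDiffMap_forall_mem_convex_of_local_const (n := 1)
    (modelWithCornersSelf ℝ E)
    (t := fun y => ball (f y) (dist (f y) y) ∩ closedBall (0 : E) 1)
    (fun y => (convex_ball _ _).inter (convex_closedBall _ _)) (fun x => ⟨f x, by
      have h : ∀ᶠ y in 𝓝 x, dist (f x) (f y) < dist (f y) y :=
        ContinuousAt.eventually_lt (by fun_prop) (by fun_prop) (by simpa using hne x)
      filter_upwards [h] with y hy
      exact ⟨hy, by simpa using hf1 x⟩⟩)
  obtain ⟨r, h1, h2, h3⟩ := exists_contDiff_retraction_of_forall_ne (g := g)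
    g.contMDiff.contDiff (fun x => by simpa using (hg x).2)
    (fun x hx => by
      have h := (hg x).1
      rw [hx, mem_ball, dist_comm] at h
      exact lt_irrefl _ h)
  exact not_exists_contDiff_retraction_closedBall h1 h2 h3
end

/-- **Brouwer's fixed point theorem** for compact convex sets. -/
theorem Convex.exists_fixedPoint_of_isCompact {V : Type*} [NormedAddCommGroup V] [NormedSpace ℝ V]
    [FiniteDimensional ℝ V] {K : Set V} (hne : K.Nonempty) (hK : IsCompact K)
    (hc : Convex ℝ K) {f : V → V} (hf : ContinuousOn f K) (hm : MapsTo f K K) :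
    ∃ x ∈ K, f x = x := by
  let e := toEuclidean (E := V)
  have hK' : IsCompact (e '' K) := hK.image e.continuous
  obtain ⟨p, hpL, hpK, hp⟩ := exists_lipschitz_projection (hne.image e) hK'.isComplete
    (hc.linear_image e.toLinearEquiv.toLinearMap)
  obtain ⟨R, hR0, hR⟩ := hK'.isBounded.exists_pos_norm_le
  have hpK' : ∀ x, e.symm (p x) ∈ K := fun x => by
    obtain ⟨y, hy, hyx⟩ := hpK x
    rw [← hyx]; simpa using hy
  have hcont : Continuous fun x => e (f (e.symm (p x))) :=
    e.continuous.comp (hf.comp_continuous (e.symm.continuous.comp hpL.continuous) hpK')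
  obtain ⟨x, hx⟩ := exists_fixedPoint_of_norm_le_one
    (f := fun x => R⁻¹ • e (f (e.symm (p (R • x)))))
    ((hcont.comp (continuous_const_smul R)).const_smul R⁻¹) (fun x => by
      rw [norm_smul, norm_inv, Real.norm_of_nonneg hR0.le, inv_mul_le_one₀ hR0]
      exact hR _ (mem_image_of_mem e (hm (hpK' _))))
  have hx' : e (f (e.symm (p (R • x)))) = R • x := by
    rw [eq_comm, ← inv_smul_eq_iff₀ (inv_ne_zero hR0.ne'), inv_inv] at hx
    exact hx.symm
  have hmem : R • x ∈ e '' K := hx' ▸ mem_image_of_mem e (hm (hpK' _))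
  rw [projection_eq_self_of_inner_le hp hmem] at hx'
  refine ⟨e.symm (R • x), ?_, ?_⟩
  · obtain ⟨y, hy, hyx⟩ := hmem
    rw [← hyx]; simpa using hy
  · rw [e.eq_symm_apply, hx']

theorem exists_isClopen_of_disjoint_connectedComponents {X : Type*} [TopologicalSpace X]
    [CompactSpace X] [T2Space X] {A B : Set X} (hA : IsClosed A) (hB : IsClosed B)
    (h : ∀ a ∈ A, ∀ b ∈ B, b ∉ connectedComponent a) :
    ∃ C, IsClopen C ∧ A ⊆ C ∧ Disjoint C B := by
  have hc := ConnectedComponents.continuous_coe (α := X)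
  have hA' : IsClosed ((↑) '' A : Set (ConnectedComponents X)) := (hA.isCompact.image hc).isClosed
  have hB' : IsClosed ((↑) '' B : Set (ConnectedComponents X)) := (hB.isCompact.image hc).isClosed
  obtain ⟨C, hC, hAC, hCB⟩ := exists_clopen_of_closed_subset_open hA' hB'.isOpen_compl (by
    rintro _ ⟨a, ha, rfl⟩ ⟨b, hb, hab⟩
    exact h a ha b hb (ConnectedComponents.coe_eq_coe'.1 hab))
  exact ⟨(↑) ⁻¹' C, hC.preimage hc, fun a ha => hAC (mem_image_of_mem _ ha),
    Set.disjoint_left.2 fun b hb hbB => hCB hb (mem_image_of_mem _ hbB)⟩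

/-- Browder's fixpoint theorem: for a nonempty compact convex D ⊆ ℝ^d and
a continuous H : [0,1] × D → D, there is a connected set of fixpoint pairs
(t, x) with H(t,x) = x containing points at levels t = 0 and t = 1. -/
theorem browder_fixpoint (d : ℕ) (D : Set (EuclideanSpace ℝ (Fin d)))
    (hne : D.Nonempty) (hcomp : IsCompact D) (hconv : Convex ℝ D)
    (H : ℝ × EuclideanSpace ℝ (Fin d) → EuclideanSpace ℝ (Fin d))
    (hcont : ContinuousOn H (Set.Icc (0 : ℝ) 1 ×ˢ D))
    (hmaps : Set.MapsTo H (Set.Icc (0 : ℝ) 1 ×ˢ D) D) :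
    ∃ P : Set (ℝ × EuclideanSpace ℝ (Fin d)),
      P ⊆ {p ∈ Set.Icc (0 : ℝ) 1 ×ˢ D | H p = p.2} ∧
      IsConnected P ∧
      (∃ x₀ ∈ D, (0, x₀) ∈ P ∧ H (0, x₀) = x₀) ∧
      (∃ x₁ ∈ D, (1, x₁) ∈ P ∧ H (1, x₁) = x₁) := by
  set K := Set.Icc (0 : ℝ) 1 ×ˢ D
  set S := {p ∈ K | H p = p.2}
  have hK : IsCompact K := isCompact_Icc.prod hcomp
  have hS : IsCompact S := by
    have : IsClosed (K ∩ (fun p => H p - p.2) ⁻¹' {0}) :=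
      (hcont.sub continuousOn_snd).preimage_isClosed_of_isClosed hK.isClosed isClosed_singleton
    refine hK.of_isClosed_subset ?_ (sep_subset _ _)
    convert this using 1
    ext p
    simp [S, sub_eq_zero]
  have : CompactSpace S := isCompact_iff_compactSpace.1 hS
  have hlev : ∀ c : ℝ, IsClosed {p : S | p.1.1 = c} := fun c =>
    isClosed_eq (by fun_prop) continuous_const
  by_cases hconn : ∃ a ∈ {p : S | p.1.1 = 0}, ∃ b ∈ {p : S | p.1.1 = 1}, b ∈ connectedComponent a
  · obtain ⟨⟨⟨ta, xa⟩, ha⟩, rfl : ta = 0, ⟨⟨tb, xb⟩, hb⟩, rfl : tb = 1, hab⟩ := hconn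
    refine ⟨(↑) '' connectedComponent (⟨(0, xa), ha⟩ : S), ?_,
      isConnected_connectedComponent.image _ continuous_subtype_val.continuousOn,
      ⟨xa, ha.1.2, ⟨_, mem_connectedComponent, rfl⟩, ha.2⟩, ⟨xb, hb.1.2, ⟨_, hab, rfl⟩, hb.2⟩⟩
    rintro _ ⟨p, -, rfl⟩
    exact p.2
  · push Not at hconn
    exfalso
    obtain ⟨C, hC, hAC, hCB⟩ := exists_isClopen_of_disjoint_connectedComponents (hlev 0) (hlev 1)
      hconn
    have hcl : ∀ T : Set S, IsClosed T → IsClosed ((↑) '' T : Set (ℝ × EuclideanSpace ℝ (Fin d))) :=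
      fun T hT => (hT.isCompact.image continuous_subtype_val).isClosed
    obtain ⟨φ, hφ0, hφ1, hφ⟩ := exists_continuous_zero_one_of_isClosed
      (hcl _ hC.compl.isClosed) (hcl _ hC.isClosed)
      ((disjoint_image_iff Subtype.val_injective).2 disjoint_compl_left)
    obtain ⟨p, hpK, hp⟩ := Convex.exists_fixedPoint_of_isCompact
      (K := K) (f := fun p => (φ p, H p))
      ((nonempty_Icc.2 zero_le_one).prod hne) hK ((convex_Icc 0 1).prod hconv)
      (φ.continuous.continuousOn.prodMk hcont) (fun p hp => ⟨hφ p, hmaps hp⟩)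
    have hpS : p ∈ S := ⟨hpK, congrArg Prod.snd hp⟩
    have hp1 : φ p = p.1 := congrArg Prod.fst hp
    by_cases hpC : (⟨p, hpS⟩ : S) ∈ C
    · have h1 : φ p = 1 := hφ1 ⟨_, hpC, rfl⟩
      exact Set.disjoint_left.1 hCB hpC (hp1.symm.trans h1)
    · have h0 : φ p = 0 := hφ0 ⟨⟨p, hpS⟩, hpC, rfl⟩
      exact hpC (hAC (hp1.symm.trans h0))
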